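/- arXiv:1704.04472 — 3 statements merged into one kernel-verified Lean document; each statement's English description precedes it below -/
import Mathlib

section
/- For every alphabet Σ of size σ ≥ 2, every n ∈ ℕ, every integer ℓ ≥ 0, and every real t with 0 ≤ t ≤ 0.1·ln σ, if S ∈ Σⁿ is chosen uniformly at random, then P[n − L(S) ≥ ℓ] ≤ C(t)·e^{−tℓ}, where C(t) = (σ³ − σ²e^{2t})/(σ³ − 2σ²e^{2t} + e^{4t}). -/
/-!
Every border of a border of `S` is a border of `S`, so a bordered string `S` has a nonempty proper
border `U` that is itself unbordered. The two occurrences of `U` cannot overlap, since an overlap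
would be a border of `U`; hence `S = U V U`, and `|S| - L(S) ≤ 2|U| + (|V| - L(V))`.

Let `s = |Σ|`, `q = e^{2t}`, `x = q / s`, and let `E n` be the mean of `e^{t(n - L(S))}` over words
of length `n`. Summing over `U` and `V` gives `E n ≤ 1 + ∑_{k ≥ 1} p_k x^k E (n - 2k)`, where `p_k`
is the fraction of unbordered words among those of length `k`. Here `p_1 ≤ 1`, and
`p_k ≤ 1 - 1 / s` for `k ≥ 2` since the first and last letters of such a word differ. So the weights
sum to at most `M = x + (1 - 1 / s) x² / (1 - x)`, and `E n ≤ 1 / (1 - M) = C(t)` by induction as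
soon as `M < 1`. Markov's inequality concludes. The condition `t ≤ 0.1 ln s` says `q⁵ ≤ s`, which
ensures `M < 1`.
-/

open Finset

/-- `S` has a border of length `ℓ`: `1 ≤ ℓ ≤ |S|` and the length-`ℓ` prefix of `S`
equals its length-`ℓ` suffix. -/
def HasBorder {α : Type*} (S : List α) (ℓ : ℕ) : Prop :=
  1 ≤ ℓ ∧ ℓ ≤ S.length ∧ S.take ℓ = S.drop (S.length - ℓ)

/-- A string is unbordered if it has no proper border (no border of length `< |S|`). -/
def Unbordered {α : Type*} (S : List α) : Prop :=
  ∀ ℓ, ℓ < S.length → ¬ HasBorder S ℓ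

/-- `maxUnb S` is `L(S)`: the maximum length of (nonempty) unbordered factors of `S`. -/
noncomputable def maxUnb {α : Type*} (S : List α) : ℕ :=
  sSup {k | ∃ T, T ≠ [] ∧ T <:+: S ∧ Unbordered T ∧ T.length = k}

/-- `p > 0` is a period of `T` if `T[i] = T[i+p]` whenever both indices are valid. -/
def IsPeriod {α : Type*} (T : List α) (p : ℕ) : Prop :=
  0 < p ∧ ∀ (i : ℕ) (h : i + p < T.length),
    T[i]'(Nat.lt_of_le_of_lt (Nat.le_add_right i p) h) = T[i + p]'h

/-- `per T` is the shortest period of `T`. -/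
noncomputable def per {α : Type*} (T : List α) : ℕ := sInf {p | IsPeriod T p}

/-- `borderF S` is `F(S)`: the length of the shortest border of `S`. -/
noncomputable def borderF {α : Type*} (S : List α) : ℕ := sInf {ℓ | HasBorder S ℓ}

/-- `substr S i j` is the factor `S[i,j]` in 1-based closed-interval indexing. -/
def substr {α : Type*} (S : List α) (i j : ℕ) : List α := (S.drop (i - 1)).take (j + 1 - i)

section Renewal

lemma le_div_one_sub_of_le_add_sum {ι : Type*} {a : ℕ → ℝ} {w : ι → ℝ} {b M : ℝ}
    {I : ℕ → Finset ι} {g : ℕ → ι → ℕ} (hg : ∀ n, ∀ i ∈ I n, g n i < n) (hb : 0 ≤ b)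
    (hw : ∀ i, 0 ≤ w i) (hM : M < 1) (hsum : ∀ n, ∑ i ∈ I n, w i ≤ M)
    (ha : ∀ n, a n ≤ b + ∑ i ∈ I n, w i * a (g n i)) (n : ℕ) : a n ≤ b / (1 - M) := by
  have hM' : 0 < 1 - M := sub_pos.2 hM
  induction n using Nat.strong_induction_on with
  | _ n ih =>
    calc a n ≤ b + ∑ i ∈ I n, w i * a (g n i) := ha n
      _ ≤ b + ∑ i ∈ I n, w i * (b / (1 - M)) := by
          gcongr with i hi
          · exact hw i
          · exact ih _ (hg n i hi)
      _ = b + (∑ i ∈ I n, w i) * (b / (1 - M)) := by rw [sum_mul]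
      _ ≤ b + M * (b / (1 - M)) := by
          gcongr
          exact hsum n
      _ = b / (1 - M) := by
          field_simp
          ring

/-- The sum `x + (1 - 1 / s) (x ^ 2 + x ^ 3 + ⋯)`, in closed form for `|x| < 1`. It bounds the total
weight of the possible borders over an alphabet of size `s`. -/
noncomputable def borderWeight (s x : ℝ) : ℝ := x / s + (1 - 1 / s) * (x / (1 - x))

lemma one_sub_borderWeight {s q : ℝ} (hs : 0 < s) (hqs : q < s) :
    1 - borderWeight s (q / s) =
      (s ^ 3 - 2 * s ^ 2 * q + q ^ 2) / (s ^ 3 - s ^ 2 * q) := by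
  have hsub : s - q ≠ 0 := (sub_pos.2 hqs).ne'
  rw [borderWeight, one_sub_div hs.ne', show s ^ 3 - s ^ 2 * q = s ^ 2 * (s - q) by ring]
  field_simp
  ring

end Renewal

section Borders

variable {α : Type*} {S U V : List α}

lemma unbordered_iff_forall_prefix_suffix :
    Unbordered S ↔ ∀ U, U ≠ [] → U <+: S → U <:+ S → U = S := by
  constructor
  · intro h U hU hpre hsuf
    refine hpre.eq_of_length_le (not_lt.1 fun hlt => h U.length hlt ⟨?_, hpre.length_le, ?_⟩)
    · exact List.length_pos_iff.2 hU
    · rw [← List.prefix_iff_eq_take.1 hpre, ← List.suffix_iff_eq_drop.1 hsuf]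
  · rintro h ℓ hlt ⟨hpos, hle, heq⟩
    have htake : (S.take ℓ).length = ℓ := List.length_take_of_le hle
    have hS : S.take ℓ = S :=
      h _ (List.length_pos_iff.1 (by omega)) (List.take_prefix ℓ S) (heq ▸ List.drop_suffix _ S)
    rw [hS] at htake
    omega

lemma exists_unbordered_prefix_suffix (S : List α) (hS : S ≠ []) :
    ∃ U, U ≠ [] ∧ Unbordered U ∧ U <+: S ∧ U <:+ S := by
  by_cases hunb : Unbordered S
  · exact ⟨S, hS, hunb, List.prefix_rfl, List.suffix_rfl⟩
  · simp only [unbordered_iff_forall_prefix_suffix, not_forall] at hunb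
    obtain ⟨B, hB, hpre, hsuf, hne⟩ := hunb
    have hlt : B.length < S.length :=
      hpre.length_le.lt_of_ne fun hlen => hne (hpre.eq_of_length hlen)
    obtain ⟨U, hU, hUunb, hUpre, hUsuf⟩ := exists_unbordered_prefix_suffix B hB
    exact ⟨U, hU, hUunb, hUpre.trans hpre, hUsuf.trans hsuf⟩
termination_by S.length

lemma Unbordered.exists_eq_append_append (hU : Unbordered U) (hpre : U <+: S) (hsuf : U <:+ S)
    (hne : U ≠ S) : ∃ V, S = U ++ V ++ U := by
  obtain ⟨W, rfl⟩ := hsuf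
  rcases List.prefix_or_prefix_of_prefix hpre (List.prefix_append W U) with
    ⟨V, rfl⟩ | ⟨overlap, hWU⟩
  · exact ⟨V, rfl⟩
  · have hoverlap_pre : overlap <+: U := by
      rw [← List.prefix_append_right_inj W, hWU]
      exact hpre
    have hoverlap_suf : overlap <:+ U := ⟨W, hWU⟩
    by_cases hnil : overlap = []
    · exact ⟨[], by simp [← hWU, hnil]⟩
    · have hoverlap_eq :=
        unbordered_iff_forall_prefix_suffix.1 hU overlap hnil hoverlap_pre hoverlap_suf
      have hW : W = [] := by simpa [hoverlap_eq] using hWU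
      exact absurd (by simp [hW]) hne

lemma exists_eq_append_append_of_not_unbordered (hS : ¬ Unbordered S) :
    ∃ U V, U ≠ [] ∧ Unbordered U ∧ S = U ++ V ++ U := by
  have hnil : S ≠ [] := by
    rintro rfl
    simp [Unbordered] at hS
  obtain ⟨U, hU, hunb, hpre, hsuf⟩ := exists_unbordered_prefix_suffix S hnil
  obtain ⟨V, hV⟩ := hunb.exists_eq_append_append hpre hsuf (by rintro rfl; exact hS hunb)
  exact ⟨U, V, hU, hunb, hV⟩

lemma not_unbordered_append_take_one (hS : S ≠ []) : ¬ Unbordered (S ++ S.take 1) := by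
  intro h
  have htake : S.take 1 ≠ [] := by simpa using hS
  have heq := unbordered_iff_forall_prefix_suffix.1 h (S.take 1) htake
    ((List.take_prefix 1 S).trans (List.prefix_append _ _)) (List.suffix_append _ _)
  exact hS (by simpa using heq)

end Borders

section Defect

variable {α : Type*} {S V : List α}

lemma bddAbove_length_unbordered_infix (S : List α) :
    BddAbove {k | ∃ T, T ≠ [] ∧ T <:+: S ∧ Unbordered T ∧ T.length = k} := by
  refine ⟨S.length, ?_⟩
  rintro k ⟨T, -, hT, -, rfl⟩
  exact hT.length_le

lemma Unbordered.length_le_maxUnb (hS : Unbordered S) : S.length ≤ maxUnb S := by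
  rcases eq_or_ne S [] with rfl | hnil
  · simp
  · exact le_csSup (bddAbove_length_unbordered_infix S) ⟨S, hnil, List.infix_rfl, hS, rfl⟩

lemma maxUnb_le_of_infix (h : V <:+: S) : maxUnb V ≤ maxUnb S := by
  refine csSup_le' ?_
  rintro k ⟨T, hnil, hT, hunb, hk⟩
  exact le_csSup (bddAbove_length_unbordered_infix S) ⟨T, hnil, hT.trans h, hunb, hk⟩

/-- The quantity `|S| - L(S)` whose tail is to be bounded. The subtraction does not truncate,
since `L(S) ≤ |S|`. -/
noncomputable def defect (S : List α) : ℕ := S.length - maxUnb S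

lemma Unbordered.defect_eq_zero (hS : Unbordered S) : defect S = 0 :=
  Nat.sub_eq_zero_of_le hS.length_le_maxUnb

lemma defect_append_append_le (U V : List α) :
    defect (U ++ V ++ U) ≤ 2 * U.length + defect V := by
  have hmono : maxUnb V ≤ maxUnb (U ++ V ++ U) := maxUnb_le_of_infix ⟨U, U, rfl⟩
  simp only [defect, List.length_append]
  omega

end Defect

section Words

variable (Γ : Type*) [Fintype Γ]

/-- The finite set of words of length `n`, encoded as lists so that words of different lengths can
be concatenated. -/
def words (n : ℕ) : Finset (List Γ) :=
  univ.map ⟨fun S : Fin n → Γ => List.ofFn S, List.ofFn_injective⟩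

variable {Γ} in
lemma mem_words {n : ℕ} {S : List Γ} : S ∈ words Γ n ↔ S.length = n := by
  constructor
  · intro h
    obtain ⟨f, -, rfl⟩ := Finset.mem_map.1 h
    exact List.length_ofFn
  · rintro rfl
    exact Finset.mem_map.2 ⟨S.get, mem_univ _, List.ofFn_get S⟩

lemma card_words (n : ℕ) : #(words Γ n) = Fintype.card Γ ^ n := by
  simp [words]

open Classical in
/-- The finite set of unbordered words of length `n`, the candidates for the border `U` in a
decomposition `U V U`. -/
noncomputable def unborderedWords (n : ℕ) : Finset (List Γ) :=
  (words Γ n).filter Unbordered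

/-- The probability that a uniformly random word of length `n` is unbordered. -/
noncomputable def unborderedFreq (n : ℕ) : ℝ :=
  #(unborderedWords Γ n) / (Fintype.card Γ : ℝ) ^ n

lemma unborderedFreq_nonneg (n : ℕ) : 0 ≤ unborderedFreq Γ n := by
  unfold unborderedFreq
  positivity

lemma unborderedFreq_le_one (n : ℕ) : unborderedFreq Γ n ≤ 1 := by
  classical
  refine div_le_one_of_le₀ ?_ (by positivity)
  exact_mod_cast (card_filter_le _ _).trans_eq (card_words Γ n)

lemma card_unborderedWords_add_le {n : ℕ} (hn : n ≠ 0) :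
    #(unborderedWords Γ (n + 1)) + Fintype.card Γ ^ n ≤ Fintype.card Γ ^ (n + 1) := by
  classical
  -- Repeating the first letter at the end embeds the words of length `n` into the bordered ones.
  have hbordered :
      #(words Γ n) ≤ #((words Γ (n + 1)).filter fun S => ¬ Unbordered S) := by
    refine card_le_card_of_injOn (fun S => S ++ S.take 1) ?_ ?_
    · intro S hS
      have hlen : S.length = n := mem_words.1 hS
      have hnil : S ≠ [] := List.length_pos_iff.1 (by omega)
      refine mem_filter.2 ⟨mem_words.2 ?_, not_unbordered_append_take_one hnil⟩
      simp only [List.length_append, List.length_take]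
      omega
    · intro S hS T hT h
      exact List.append_inj_left h ((mem_words.1 hS).trans (mem_words.1 hT).symm)
  rw [← card_words, ← card_words, ← card_filter_add_card_filter_not (s := words Γ (n + 1))
    Unbordered]
  exact Nat.add_le_add_left hbordered _

lemma unborderedFreq_le_one_sub [Nonempty Γ] {n : ℕ} (hn : 2 ≤ n) :
    unborderedFreq Γ n ≤ 1 - 1 / Fintype.card Γ := by
  obtain ⟨n, rfl⟩ := Nat.exists_eq_add_of_le' (one_le_two.trans hn)
  have hcard : (0 : ℝ) < Fintype.card Γ := by exact_mod_cast Fintype.card_pos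
  have hcount : (#(unborderedWords Γ (n + 1)) : ℝ) + (Fintype.card Γ : ℝ) ^ n ≤
      (Fintype.card Γ : ℝ) ^ (n + 1) := by
    exact_mod_cast card_unborderedWords_add_le Γ (by omega : n ≠ 0)
  rw [unborderedFreq, div_le_iff₀ (by positivity)]
  calc (#(unborderedWords Γ (n + 1)) : ℝ)
      ≤ (Fintype.card Γ : ℝ) ^ (n + 1) - (Fintype.card Γ : ℝ) ^ n := le_sub_iff_add_le.2 hcount
    _ = (1 - 1 / Fintype.card Γ) * (Fintype.card Γ : ℝ) ^ (n + 1) := by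
        field_simp
        ring

lemma sum_unborderedFreq_mul_pow_le [Nonempty Γ] {x : ℝ} (hx0 : 0 ≤ x) (hx1 : x < 1) (N : ℕ) :
    ∑ k ∈ Ico 1 N, unborderedFreq Γ k * x ^ k ≤ borderWeight (Fintype.card Γ) x := by
  have hcard : (1 : ℝ) ≤ Fintype.card Γ := by exact_mod_cast Fintype.card_pos
  have hcoeff : (0 : ℝ) ≤ 1 - 1 / Fintype.card Γ :=
    sub_nonneg.2 (div_le_one_of_le₀ hcard (Nat.cast_nonneg _))
  have hfreq : ∀ k ∈ Ico 1 N, unborderedFreq Γ k ≤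
      (if k = 1 then 1 / (Fintype.card Γ : ℝ) else 0) + (1 - 1 / Fintype.card Γ) := by
    intro k hk
    split_ifs with h
    · simpa using unborderedFreq_le_one Γ k
    · have hk1 := (mem_Ico.1 hk).1
      simpa using unborderedFreq_le_one_sub Γ (by omega : 2 ≤ k)
  calc ∑ k ∈ Ico 1 N, unborderedFreq Γ k * x ^ k
      ≤ ∑ k ∈ Ico 1 N, ((if k = 1 then 1 / (Fintype.card Γ : ℝ) else 0) +
          (1 - 1 / Fintype.card Γ)) * x ^ k := by
        gcongr with k hk
        exact hfreq k hk
    _ = (if 1 ∈ Ico 1 N then 1 / (Fintype.card Γ : ℝ) * x else 0) +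
          (1 - 1 / Fintype.card Γ) * ∑ k ∈ Ico 1 N, x ^ k := by
        simp only [add_mul, sum_add_distrib, mul_sum, ite_mul, zero_mul, sum_ite_eq', pow_one]
    _ ≤ borderWeight (Fintype.card Γ) x := by
        unfold borderWeight
        gcongr
        · split_ifs
          · rw [one_div_mul_eq_div]
          · positivity
        · simpa using geom_sum_Ico_le_of_lt_one (m := 1) (n := N) hx0 hx1

end Words

section Moment

/-- The moment generating function of `n - L(S)` for uniformly random `S` of length `n`, written in
the variable `r = e^t`. -/
noncomputable def defectMoment (Γ : Type*) [Fintype Γ] (r : ℝ) (n : ℕ) : ℝ :=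
  (∑ S ∈ words Γ n, r ^ defect S) / (Fintype.card Γ : ℝ) ^ n

variable (Γ : Type*) [Fintype Γ] {r : ℝ}

lemma sum_unbordered_pow_defect_le (r : ℝ) (n : ℕ) :
    ∑ S ∈ unborderedWords Γ n, r ^ defect S ≤ (Fintype.card Γ : ℝ) ^ n := by
  classical
  calc ∑ S ∈ unborderedWords Γ n, r ^ defect S
      = #(unborderedWords Γ n) := by
        rw [card_eq_sum_ones, Nat.cast_sum]
        refine sum_congr rfl fun S hS => ?_
        rw [(mem_filter.1 hS).2.defect_eq_zero, pow_zero, Nat.cast_one]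
    _ ≤ (Fintype.card Γ : ℝ) ^ n := by
        exact_mod_cast (card_filter_le _ _).trans_eq (card_words Γ n)

open Classical in
lemma filter_not_unbordered_subset_image (n : ℕ) :
    (words Γ n).filter (fun S => ¬ Unbordered S) ⊆
      ((Ico 1 (n / 2 + 1)).sigma fun k => unborderedWords Γ k ×ˢ words Γ (n - 2 * k)).image
        fun p => p.2.1 ++ p.2.2 ++ p.2.1 := by
  intro S hS
  obtain ⟨hlen, hbordered⟩ := mem_filter.1 hS
  obtain ⟨U, V, hnil, hunb, rfl⟩ := exists_eq_append_append_of_not_unbordered hbordered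
  have hpos := List.length_pos_iff.2 hnil
  simp only [mem_words, List.length_append] at hlen
  refine mem_image.2 ⟨⟨U.length, U, V⟩, ?_, rfl⟩
  simp only [mem_sigma, mem_Ico, mem_product, unborderedWords, mem_filter, mem_words]
  exact ⟨⟨hpos, by omega⟩, ⟨trivial, hunb⟩, by omega⟩

open Classical in
lemma sum_bordered_pow_defect_le (hr : 1 ≤ r) (n : ℕ) :
    ∑ S ∈ (words Γ n).filter (fun S => ¬ Unbordered S), r ^ defect S ≤
      ∑ k ∈ Ico 1 (n / 2 + 1), #(unborderedWords Γ k) * (r ^ 2) ^ k *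
        ∑ V ∈ words Γ (n - 2 * k), r ^ defect V := by
  have hnonneg : ∀ S : List Γ, 0 ≤ r ^ defect S := fun S => by positivity
  calc ∑ S ∈ (words Γ n).filter (fun S => ¬ Unbordered S), r ^ defect S
      ≤ ∑ S ∈ ((Ico 1 (n / 2 + 1)).sigma fun k =>
            unborderedWords Γ k ×ˢ words Γ (n - 2 * k)).image
          (fun p => p.2.1 ++ p.2.2 ++ p.2.1), r ^ defect S :=
        sum_le_sum_of_subset_of_nonneg (filter_not_unbordered_subset_image Γ n)
          fun S _ _ => hnonneg S
    _ ≤ ∑ p ∈ (Ico 1 (n / 2 + 1)).sigma fun k => unborderedWords Γ k ×ˢ words Γ (n - 2 * k),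
          r ^ defect (p.2.1 ++ p.2.2 ++ p.2.1) :=
        sum_image_le_of_nonneg fun S _ => hnonneg S
    _ = ∑ k ∈ Ico 1 (n / 2 + 1), ∑ U ∈ unborderedWords Γ k, ∑ V ∈ words Γ (n - 2 * k),
          r ^ defect (U ++ V ++ U) := by
        simp only [sum_sigma, sum_product]
    _ ≤ ∑ k ∈ Ico 1 (n / 2 + 1), ∑ U ∈ unborderedWords Γ k, ∑ V ∈ words Γ (n - 2 * k),
          (r ^ 2) ^ k * r ^ defect V := by
        gcongr with k _ U hU V
        rw [← pow_mul, ← pow_add, ← mem_words.1 (mem_filter.1 hU).1]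
        exact pow_le_pow_right₀ hr (defect_append_append_le U V)
    _ = ∑ k ∈ Ico 1 (n / 2 + 1), #(unborderedWords Γ k) * (r ^ 2) ^ k *
          ∑ V ∈ words Γ (n - 2 * k), r ^ defect V := by
        simp only [sum_const, nsmul_eq_mul, mul_sum, mul_assoc]

lemma defectMoment_le_one_add_sum [Nonempty Γ] (hr : 1 ≤ r) (n : ℕ) :
    defectMoment Γ r n ≤ 1 + ∑ k ∈ Ico 1 (n / 2 + 1),
      unborderedFreq Γ k * (r ^ 2 / Fintype.card Γ) ^ k * defectMoment Γ r (n - 2 * k) := by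
  classical
  have hcard : (0 : ℝ) < Fintype.card Γ := by exact_mod_cast Fintype.card_pos
  rw [defectMoment, div_le_iff₀ (by positivity), add_mul, one_mul, sum_mul,
    ← sum_filter_add_sum_filter_not (words Γ n) Unbordered]
  refine (add_le_add (sum_unbordered_pow_defect_le Γ r n)
    (sum_bordered_pow_defect_le Γ hr n)).trans_eq (congrArg _ (sum_congr rfl fun k hk => ?_))
  have hpow : (Fintype.card Γ : ℝ) ^ n =
      Fintype.card Γ ^ k * Fintype.card Γ ^ k * Fintype.card Γ ^ (n - 2 * k) := by
    have hk2 := (mem_Ico.1 hk).2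
    rw [← pow_add, ← pow_add]
    congr 1
    omega
  rw [unborderedFreq, defectMoment, hpow, div_pow]
  field_simp

lemma defectMoment_le [Nonempty Γ] (hr : 1 ≤ r) (hlt : r ^ 2 < Fintype.card Γ)
    (hpos : 0 < (Fintype.card Γ : ℝ) ^ 3 - 2 * (Fintype.card Γ : ℝ) ^ 2 * r ^ 2 + (r ^ 2) ^ 2)
    (n : ℕ) :
    defectMoment Γ r n ≤ ((Fintype.card Γ : ℝ) ^ 3 - (Fintype.card Γ : ℝ) ^ 2 * r ^ 2) /
      ((Fintype.card Γ : ℝ) ^ 3 - 2 * (Fintype.card Γ : ℝ) ^ 2 * r ^ 2 + (r ^ 2) ^ 2) := by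
  have hcard : (0 : ℝ) < Fintype.card Γ := by exact_mod_cast Fintype.card_pos
  have hnum : 0 < (Fintype.card Γ : ℝ) ^ 3 - (Fintype.card Γ : ℝ) ^ 2 * r ^ 2 := by
    rw [pow_succ, ← mul_sub]
    exact mul_pos (by positivity) (sub_pos.2 hlt)
  have hweight := one_sub_borderWeight hcard hlt
  rw [← one_div_div, ← hweight]
  refine le_div_one_sub_of_le_add_sum (I := fun n => Ico 1 (n / 2 + 1))
    (g := fun n k => n - 2 * k) (fun n k hk => ?_) zero_le_one (fun k => ?_) ?_
    (fun n => sum_unborderedFreq_mul_pow_le Γ (by positivity) ((div_lt_one hcard).2 hlt) _)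
    (defectMoment_le_one_add_sum Γ hr) n
  · obtain ⟨hk1, hk2⟩ := mem_Ico.1 hk
    omega
  · exact mul_nonneg (unborderedFreq_nonneg Γ k) (by positivity)
  · exact sub_pos.1 (hweight ▸ div_pos hpos hnum)

lemma card_le_defect_div_le_defectMoment_div (hr : 1 ≤ r) (n ℓ : ℕ) :
    (#{S : Fin n → Γ | ℓ ≤ n - maxUnb (List.ofFn S)} : ℝ) / (Fintype.card Γ : ℝ) ^ n ≤
      defectMoment Γ r n / r ^ ℓ := by
  have hr0 : 0 < r := one_pos.trans_le hr
  rw [defectMoment, div_right_comm]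
  gcongr
  rw [le_div_iff₀ (by positivity), words, sum_map, ← nsmul_eq_mul]
  calc #{S : Fin n → Γ | ℓ ≤ n - maxUnb (List.ofFn S)} • r ^ ℓ
      ≤ ∑ S : Fin n → Γ with ℓ ≤ n - maxUnb (List.ofFn S), r ^ defect (List.ofFn S) := by
        refine card_nsmul_le_sum _ _ _ fun S hS => pow_le_pow_right₀ hr ?_
        simpa only [defect, List.length_ofFn] using (mem_filter.1 hS).2
    _ ≤ ∑ S : Fin n → Γ, r ^ defect (List.ofFn S) :=
        sum_le_sum_of_subset_of_nonneg (filter_subset _ _) fun S _ _ => by positivity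

end Moment

section Parameters

variable {s : ℕ} {q t : ℝ}

lemma lt_of_pow_five_le_two (hq : q ^ 5 ≤ 2) : q < 1.15 :=
  lt_of_pow_lt_pow_left₀ 5 (by norm_num) (hq.trans_lt (by norm_num))

lemma two_mul_lt_of_pow_five_le (hs : 3 ≤ s) (hq : q ^ 5 ≤ s) : 2 * q < (s : ℝ) := by
  refine lt_of_pow_lt_pow_left₀ 5 (by positivity) ?_
  have hs4 : (3 : ℝ) ^ 4 ≤ (s : ℝ) ^ 4 := by
    gcongr
    exact_mod_cast hs
  calc (2 * q) ^ 5 = 32 * q ^ 5 := by ring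
    _ ≤ (32 : ℝ) * s := by gcongr
    _ < (s : ℝ) ^ 4 * s := by
        gcongr
        linarith
    _ = (s : ℝ) ^ 5 := by ring

lemma lt_of_pow_five_le (hs : 2 ≤ s) (hq : q ^ 5 ≤ s) : q < s := by
  rcases hs.eq_or_lt with rfl | hs
  · exact (lt_of_pow_five_le_two hq).trans (by norm_num)
  · have hs0 : (0 : ℝ) ≤ s := s.cast_nonneg
    linarith [two_mul_lt_of_pow_five_le hs hq]

lemma denom_pos_of_pow_five_le (hs : 2 ≤ s) (hq : q ^ 5 ≤ s) :
    0 < (s : ℝ) ^ 3 - 2 * (s : ℝ) ^ 2 * q + q ^ 2 := by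
  rcases hs.eq_or_lt with rfl | hs
  · have hq_lt := lt_of_pow_five_le_two hq
    norm_num at hq_lt ⊢
    nlinarith
  · have hsub : 0 < (s : ℝ) - 2 * q := sub_pos.2 (two_mul_lt_of_pow_five_le hs hq)
    calc (0 : ℝ) < (s : ℝ) ^ 2 * (s - 2 * q) + q ^ 2 := by positivity
      _ = (s : ℝ) ^ 3 - 2 * (s : ℝ) ^ 2 * q + q ^ 2 := by ring

lemma exp_two_mul_pow_five_le (hs : s ≠ 0) (ht : t ≤ 0.1 * Real.log s) :
    Real.exp (2 * t) ^ 5 ≤ s := by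
  rw [← Real.exp_nat_mul, ← Real.le_log_iff_exp_le (by positivity)]
  push_cast
  linarith

lemma exp_two_mul_lt (hs : 2 ≤ s) (ht : t ≤ 0.1 * Real.log s) : Real.exp (2 * t) < s :=
  lt_of_pow_five_le hs (exp_two_mul_pow_five_le (by omega) ht)

lemma denom_exp_pos (hs : 2 ≤ s) (ht : t ≤ 0.1 * Real.log s) :
    0 < (s : ℝ) ^ 3 - 2 * (s : ℝ) ^ 2 * Real.exp (2 * t) + Real.exp (4 * t) := by
  have hexp : Real.exp (4 * t) = Real.exp (2 * t) ^ 2 := by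
    rw [← Real.exp_nat_mul]
    ring_nf
  exact hexp ▸ denom_pos_of_pow_five_le hs (exp_two_mul_pow_five_le (by omega) ht)

end Parameters

theorem tail_bound_general (Γ : Type*) [Fintype Γ] (n ℓ : ℕ) {t : ℝ} (ht : 0 ≤ t)
    (hlt : Real.exp (2 * t) < Fintype.card Γ)
    (hpos : 0 < (Fintype.card Γ : ℝ) ^ 3 - 2 * (Fintype.card Γ : ℝ) ^ 2 * Real.exp (2 * t) +
      Real.exp (4 * t)) :
    (#{S : Fin n → Γ | ℓ ≤ n - maxUnb (List.ofFn S)} : ℝ) / (Fintype.card Γ : ℝ) ^ n ≤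
      ((Fintype.card Γ : ℝ) ^ 3 - (Fintype.card Γ : ℝ) ^ 2 * Real.exp (2 * t)) /
          ((Fintype.card Γ : ℝ) ^ 3 - 2 * (Fintype.card Γ : ℝ) ^ 2 * Real.exp (2 * t) +
            Real.exp (4 * t)) *
        Real.exp (-t * ℓ) := by
  have hsq : Real.exp (2 * t) = Real.exp t ^ 2 := by
    rw [← Real.exp_nat_mul, Nat.cast_ofNat]
  have hfourth : Real.exp (4 * t) = (Real.exp t ^ 2) ^ 2 := by
    rw [← pow_mul, ← Real.exp_nat_mul]
    norm_num
  have hinv : Real.exp (-t * ℓ) = (Real.exp t ^ ℓ)⁻¹ := by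
    rw [← Real.exp_nat_mul, ← Real.exp_neg, mul_comm (ℓ : ℝ), neg_mul]
  have hcard : 0 < Fintype.card Γ := by exact_mod_cast (Real.exp_pos _).trans hlt
  have : Nonempty Γ := Fintype.card_pos_iff.1 hcard
  have hr : 1 ≤ Real.exp t := Real.one_le_exp ht
  rw [hsq] at hlt
  rw [hsq, hfourth] at hpos ⊢
  rw [hinv, ← div_eq_mul_inv]
  refine (card_le_defect_div_le_defectMoment_div Γ hr n ℓ).trans ?_
  gcongr
  exact defectMoment_le Γ hr hlt hpos n

/-- for a uniformly random `S ∈ Σⁿ` over an alphabet of size `σ ≥ 2`, every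
`ℓ ≥ 0`, and every `0 ≤ t ≤ 0.1 ln σ`, we have `P[n - L(S) ≥ ℓ] ≤ C(t)·e^{-tℓ}`. -/
theorem tail_bound (σ : ℕ) (hσ : 2 ≤ σ) (Γ : Type) [Fintype Γ]
    (hcard : Fintype.card Γ = σ) (n ℓ : ℕ) (t : ℝ)
    (ht0 : 0 ≤ t) (ht1 : t ≤ 0.1 * Real.log σ) :
    (((univ.filter fun S : Fin n → Γ => ℓ ≤ n - maxUnb (List.ofFn S)).card : ℝ)) / (σ : ℝ) ^ n ≤
      ((σ : ℝ) ^ 3 - (σ : ℝ) ^ 2 * Real.exp (2 * t)) /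
          ((σ : ℝ) ^ 3 - 2 * (σ : ℝ) ^ 2 * Real.exp (2 * t) + Real.exp (4 * t)) *
        Real.exp (-t * ℓ) := by
  subst hcard
  exact tail_bound_general Γ n ℓ ht0 (exp_two_mul_lt hσ ht1) (denom_exp_pos hσ ht1)
end

section
/- Let Σ be an alphabet of size σ ≥ 2, let n ≥ 2, and let S ∈ Σⁿ be chosen uniformly at random. Then P[F(S) = 1] ≤ σ^{-1}, and for every integer ℓ with 2 ≤ ℓ ≤ n/2, P[F(S) = ℓ] ≤ (σ − 1)·σ^{−ℓ−1}. -/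
open Finset

/-!
A proper border of length `ℓ` is the same thing as the period `n - ℓ`, so a string of length `n`
with such a border is determined by its prefix of length `n - ℓ`. This leaves at most `σ ^ (n - 1)`
strings when `ℓ = 1`. A shortest proper border cannot overlap itself: a period `p` with `2 p < n`
gives the period `2 p`, that is, a shorter border. So when `2 ≤ ℓ` the last letter of the border
occurs inside the prefix of length `n - ℓ`. It is also the last letter of the string, hence differs
from the first letter, because there is no border of length one. There are
`(σ - 1) σ ^ (n - ℓ - 1)` prefixes with different letters at these two positions.
-/

namespace IsPeriod

variable {α : Type*} {S T : List α} {p q : ℕ}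

theorem add (hp : IsPeriod T p) (hq : IsPeriod T q) : IsPeriod T (p + q) := by
  refine ⟨Nat.add_pos_left hp.1 q, fun i hi => ?_⟩
  rw [hp.2 i (by omega), hq.2 (i + p) (by omega)]
  simp only [Nat.add_assoc]

theorem getElem_eq_getElem_mod (hp : IsPeriod T p) (i : ℕ) (hi : i < T.length) :
    T[i] = T[i % p]'((Nat.mod_le i p).trans_lt hi) := by
  induction i using Nat.strong_induction_on with
  | _ i ih =>
    obtain hlt | hle := lt_or_ge i p
    · simp only [Nat.mod_eq_of_lt hlt]
    · have hpos := hp.1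
      have hshift := hp.2 (i - p) (by omega)
      simp only [Nat.sub_add_cancel hle] at hshift
      rw [← hshift, ih (i - p) (by omega) (by omega)]
      simp only [← Nat.mod_eq_sub_mod hle]

theorem eq_of_take_eq (hS : IsPeriod S p) (hT : IsPeriod T p) (hlen : S.length = T.length)
    (htake : S.take p = T.take p) : S = T := by
  refine List.ext_getElem hlen fun i hiS hiT => ?_
  have hmod : i % p < (S.take p).length :=
    List.length_take ▸ lt_min (Nat.mod_lt i hS.1) ((Nat.mod_le i p).trans_lt hiS)
  rw [hS.getElem_eq_getElem_mod i hiS, hT.getElem_eq_getElem_mod i hiT]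
  simpa only [List.getElem_take] using List.getElem_of_eq htake hmod

end IsPeriod

section Borders

variable {α : Type*} {S : List α} {ℓ : ℕ}

theorem hasBorder_iff_isPeriod (hℓ : 1 ≤ ℓ) (hlt : ℓ < S.length) :
    HasBorder S ℓ ↔ IsPeriod S (S.length - ℓ) := by
  constructor
  · rintro ⟨-, -, htake⟩
    refine ⟨Nat.sub_pos_of_lt hlt, fun i hi => ?_⟩
    rw [List.getElem_take' (j := ℓ) _ (by omega)]
    simp only [htake, List.getElem_drop, Nat.add_comm]
  · rintro ⟨-, hper⟩
    refine ⟨hℓ, hlt.le, List.ext_getElem ?_ fun i hi _ => ?_⟩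
    · simp only [List.length_take, List.length_drop]
      omega
    · rw [List.length_take] at hi
      simp only [List.getElem_take, List.getElem_drop, hper i (by omega), Nat.add_comm]

theorem borderF_le_of_hasBorder (h : HasBorder S ℓ) : borderF S ≤ ℓ :=
  Nat.sInf_le h

theorem hasBorder_borderF (hS : S ≠ []) : HasBorder S (borderF S) :=
  Nat.sInf_mem (s := {ℓ | HasBorder S ℓ})
    ⟨S.length, List.length_pos_of_ne_nil hS, le_rfl, by simp⟩

theorem isPeriod_length_sub_borderF (h : borderF S < S.length) :
    IsPeriod S (S.length - borderF S) :=
  have hb := hasBorder_borderF (List.ne_nil_of_length_pos (Nat.zero_lt_of_lt h))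
  (hasBorder_iff_isPeriod hb.1 h).1 hb

theorem two_mul_borderF_le_length (h : borderF S < S.length) :
    2 * borderF S ≤ S.length := by
  by_contra! hoverlap
  have hper := isPeriod_length_sub_borderF h
  have hshorter : HasBorder S (2 * borderF S - S.length) := by
    rw [hasBorder_iff_isPeriod (by omega) (by omega)]
    convert hper.add hper using 1
    omega
  have := borderF_le_of_hasBorder hshorter
  omega

theorem getElem_zero_ne_getElem_borderF_sub_one (h2 : 2 ≤ borderF S) (h : borderF S < S.length) :
    S[0] ≠ S[borderF S - 1] := by
  intro heq
  have hlast : S[borderF S - 1] = S[S.length - 1] := by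
    rw [(isPeriod_length_sub_borderF h).2 (borderF S - 1) (by omega)]
    congr 1
    omega
  have hborder : HasBorder S 1 := by
    refine (hasBorder_iff_isPeriod le_rfl (by omega)).2 ⟨by omega, fun i hi => ?_⟩
    obtain rfl : i = 0 := by omega
    simpa only [Nat.zero_add] using heq.trans hlast
  have := borderF_le_of_hasBorder hborder
  omega

end Borders

section Counting

variable {Γ : Type*} {n ℓ : ℕ}

theorem injOn_take_hasBorder (hℓ : ℓ < n) :
    Set.InjOn (fun S : Fin n → Γ => Fin.take (n - ℓ) (n.sub_le ℓ) S)
      {S | HasBorder (List.ofFn S) ℓ} := by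
  have isPeriod_of_hasBorder {S : Fin n → Γ} (hS : HasBorder (List.ofFn S) ℓ) :
      IsPeriod (List.ofFn S) (n - ℓ) := by
    simpa only [List.length_ofFn] using
      (hasBorder_iff_isPeriod hS.1 (hℓ.trans_eq List.length_ofFn.symm)).1 hS
  intro S hS T hT hprefix
  refine List.ofFn_injective <| (isPeriod_of_hasBorder hS).eq_of_take_eq
    (isPeriod_of_hasBorder hT) (by simp only [List.length_ofFn]) ?_
  simpa only [Fin.ofFn_take_eq_take_ofFn] using congrArg List.ofFn hprefix

theorem injOn_take_borderF (hℓ : ℓ < n) :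
    Set.InjOn (fun S : Fin n → Γ => Fin.take (n - ℓ) (n.sub_le ℓ) S)
      {S | borderF (List.ofFn S) = ℓ} := by
  refine (injOn_take_hasBorder hℓ).mono ?_
  rintro S rfl
  refine hasBorder_borderF (List.ne_nil_of_length_pos ?_)
  simpa only [List.length_ofFn] using Nat.zero_lt_of_lt hℓ

theorem card_apply_ne_apply {ι : Type*} [Fintype ι] [DecidableEq ι] [Fintype Γ] [DecidableEq Γ]
    {i j : ι} (hij : i ≠ j) :
    #{f : ι → Γ | f i ≠ f j} =
      (Fintype.card Γ - 1) * Fintype.card Γ ^ (Fintype.card ι - 1) := by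
  -- Away from `i` the function is arbitrary; its value at `i` then has to avoid its value at `j`.
  let avoids (g : {k // k ≠ i} → Γ) (a : Γ) : Prop := a ≠ g ⟨j, hij.symm⟩
  let splitAt : {f : ι → Γ // f i ≠ f j} ≃ Σ g, {a // avoids g a} :=
    (((Equiv.funSplitAt i Γ).trans (Equiv.prodComm _ _)).subtypeEquiv
      (q := fun x => avoids x.1 x.2) fun _ => Iff.rfl).trans
      (Equiv.subtypeProdEquivSigmaSubtype avoids)
  have card_avoids (g : {k // k ≠ i} → Γ) :
      Fintype.card {a // avoids g a} = Fintype.card Γ - 1 := by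
    simp [avoids]
  have card_ne_i : Fintype.card {k // k ≠ i} = Fintype.card ι - 1 := by simp
  rw [← Fintype.card_subtype, Fintype.card_congr splitAt, Fintype.card_sigma,
    sum_congr rfl fun g _ => card_avoids g, sum_const, card_univ, Fintype.card_fun, card_ne_i,
    smul_eq_mul, mul_comm]

variable [Fintype Γ]

theorem card_borderF_eq_le_pow (hℓ : ℓ < n) :
    #{S : Fin n → Γ | borderF (List.ofFn S) = ℓ} ≤ Fintype.card Γ ^ (n - ℓ) := by
  have hle := card_le_card_of_injOn (s := {S : Fin n → Γ | borderF (List.ofFn S) = ℓ})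
    (t := univ) _ (fun _ _ => mem_univ _) (by simpa using injOn_take_borderF hℓ)
  simpa only [card_univ, Fintype.card_fun, Fintype.card_fin] using hle

theorem card_borderF_eq_le (h2 : 2 ≤ ℓ) (hℓ : ℓ < n) :
    #{S : Fin n → Γ | borderF (List.ofFn S) = ℓ} ≤
      (Fintype.card Γ - 1) * Fintype.card Γ ^ (n - ℓ - 1) := by
  classical
  obtain hhalf | hhalf := lt_or_ge n (2 * ℓ)
  · suffices h : #{S : Fin n → Γ | borderF (List.ofFn S) = ℓ} = 0 from h ▸ Nat.zero_le _
    rw [card_eq_zero, filter_eq_empty_iff]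
    rintro S - rfl
    have := two_mul_borderF_le_length (S := List.ofFn S) (by simpa only [List.length_ofFn] using hℓ)
    rw [List.length_ofFn] at this
    omega
  · let first : Fin (n - ℓ) := ⟨0, by omega⟩
    let last : Fin (n - ℓ) := ⟨ℓ - 1, by omega⟩
    have hne : first ≠ last := Fin.ne_of_val_ne (by simp only [first, last]; omega)
    calc #{S : Fin n → Γ | borderF (List.ofFn S) = ℓ}
      _ ≤ #{P : Fin (n - ℓ) → Γ | P first ≠ P last} := by
        refine card_le_card_of_injOn (Fin.take (n - ℓ) (n.sub_le ℓ)) ?_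
          (by simpa using injOn_take_borderF hℓ)
        intro S hS
        obtain rfl := (mem_filter.1 hS).2
        have := getElem_zero_ne_getElem_borderF_sub_one h2
          (by simpa only [List.length_ofFn] using hℓ)
        simpa [first, last, Fin.take] using this
      _ = (Fintype.card Γ - 1) * Fintype.card Γ ^ (n - ℓ - 1) := by
        rw [card_apply_ne_apply hne, Fintype.card_fin]

end Counting

theorem shortest_border_probability_general {Γ : Type*} [Fintype Γ] [Nonempty Γ] {n : ℕ}
    (hn : 2 ≤ n) :
    (#{S : Fin n → Γ | borderF (List.ofFn S) = 1} : ℝ) / (Fintype.card Γ : ℝ) ^ n ≤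
      (Fintype.card Γ : ℝ)⁻¹ ∧
    ∀ ℓ : ℕ, 2 ≤ ℓ → ℓ < n →
      (#{S : Fin n → Γ | borderF (List.ofFn S) = ℓ} : ℝ) / (Fintype.card Γ : ℝ) ^ n ≤
        ((Fintype.card Γ : ℝ) - 1) * (Fintype.card Γ : ℝ) ^ (-(ℓ : ℤ) - 1) := by
  set σ := Fintype.card Γ
  have hσ : 1 ≤ σ := Fintype.card_pos
  have hσ' : (σ : ℝ) ≠ 0 := by positivity
  refine ⟨?_, fun ℓ h2 hℓ => ?_⟩
  · rw [div_le_iff₀ (by positivity), ← pow_sub_one_mul (by omega : n ≠ 0), mul_comm,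
      mul_inv_cancel_right₀ hσ']
    exact_mod_cast card_borderF_eq_le_pow hn
  · have hcount : (#{S : Fin n → Γ | borderF (List.ofFn S) = ℓ} : ℝ) ≤
        ((σ : ℝ) - 1) * (σ : ℝ) ^ (n - ℓ - 1) := by
      rw [← Nat.cast_pred hσ]
      exact_mod_cast card_borderF_eq_le h2 hℓ
    have hexp : (σ : ℝ) ^ (-(ℓ : ℤ) - 1) * (σ : ℝ) ^ n = (σ : ℝ) ^ (n - ℓ - 1) := by
      rw [← zpow_natCast, ← zpow_natCast, ← zpow_add₀ hσ']
      congr 1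
      omega
    rwa [div_le_iff₀ (by positivity), mul_assoc, hexp]

/-- for uniformly random `S ∈ Σⁿ` with `σ ≥ 2` and `n ≥ 2`,
`P[F(S) = 1] ≤ σ⁻¹`, and `P[F(S) = ℓ] ≤ (σ - 1)·σ^{-ℓ-1}` for every `2 ≤ ℓ ≤ n/2`. -/
theorem shortest_border_probability (σ : ℕ) (hσ : 2 ≤ σ) (Γ : Type) [Fintype Γ]
    (hcard : Fintype.card Γ = σ) (n : ℕ) (hn : 2 ≤ n) :
    (((univ.filter fun S : Fin n → Γ => borderF (List.ofFn S) = 1).card : ℝ)) / (σ : ℝ) ^ n ≤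
      (σ : ℝ)⁻¹ ∧
    ∀ ℓ : ℕ, 2 ≤ ℓ → 2 * ℓ ≤ n →
      (((univ.filter fun S : Fin n → Γ => borderF (List.ofFn S) = ℓ).card : ℝ)) / (σ : ℝ) ^ n ≤
        ((σ : ℝ) - 1) * (σ : ℝ) ^ (-(ℓ : ℤ) - 1) := by
  subst hcard
  have : Nonempty Γ := Fintype.card_pos_iff.1 (by omega)
  exact (shortest_border_probability_general hn).imp_right fun h ℓ h2 hℓ => h ℓ h2 (by omega)
end

section
/- Let Σ be an alphabet of size σ ≥ 2, let n ≥ 2, let 1 ≤ ℓ ≤ n/2, and let S ∈ Σⁿ be chosen uniformly at random. Then, conditioned on the event F(S) = ℓ (assuming it has positive probability), the middle factor S[ℓ+1, n−ℓ] is uniformly distributed on Σ^{n−2ℓ}; in particular, for every t ≥ 0, E[e^{t·(n − L(S))} | F(S) = ℓ] ≤ e^{2tℓ}·E[e^{t·(m − L(T))}], where m = n − 2ℓ and T is uniformly random in Σᵐ. -/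
/-!
Let `S = u w v` with `|u| = |v| = ℓ`. For `k ≤ ℓ` the prefix and suffix of `S` of length `k` are
read off `u` and `v` alone: `ℓ` is a border length of `S` iff `u = v`, and then the shorter
borders of `S` are those of `u`. Hence `F(S) = ℓ` iff `u = v` is unbordered, a condition which
does not involve `w`, so conditioning on it leaves the middle `w` uniform. Since unbordered
factors of `w` are factors of `S`, also `L(w) ≤ L(S)`, and the moment bound follows by averaging
over the uniform `w`.
-/

open Finset

section Border

variable {α : Type*} {S T u v w : List α} {k ℓ : ℕ}

lemma borderF_eq_iff_isLeast (hℓ : ℓ ≠ 0) : borderF S = ℓ ↔ IsLeast {k | HasBorder S k} ℓ := by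
  refine ⟨?_, IsLeast.csInf_eq⟩
  rintro rfl
  have hne : {k | HasBorder S k}.Nonempty := Nat.nonempty_of_pos_sInf (Nat.pos_of_ne_zero hℓ)
  exact ⟨Nat.sInf_mem hne, fun _ => Nat.sInf_le⟩

lemma unbordered_iff_forall_length_le : Unbordered S ↔ ∀ k, HasBorder S k → S.length ≤ k :=
  forall_congr' fun _ => imp_not_comm.trans (imp_congr_right fun _ => not_lt)

lemma hasBorder_append_append_iff (huv : u.length = v.length) (hk : k ≤ u.length) :
    HasBorder (u ++ w ++ v) k ↔ 1 ≤ k ∧ u.take k = v.drop (v.length - k) := by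
  have htake : (u ++ w ++ v).take k = u.take k := by
    rw [List.append_assoc, List.take_append_of_le_length hk]
  have hdrop : (u ++ w ++ v).drop ((u ++ w ++ v).length - k) = v.drop (v.length - k) := by
    rw [List.length_append (bs := v), Nat.add_sub_assoc (huv ▸ hk), List.drop_length_add_append]
  have hlen : k ≤ (u ++ w ++ v).length := by
    simp only [List.length_append]
    omega
  rw [HasBorder, htake, hdrop, and_iff_right hlen]

lemma hasBorder_append_append_self_iff (hk : k ≤ u.length) :
    HasBorder (u ++ w ++ u) k ↔ HasBorder u k := by
  rw [hasBorder_append_append_iff rfl hk, HasBorder, and_iff_right hk]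

lemma hasBorder_append_append_length_iff (hu : u ≠ []) (huv : u.length = v.length) :
    HasBorder (u ++ w ++ v) u.length ↔ u = v := by
  have hpos : 1 ≤ u.length := List.length_pos_iff.2 hu
  rw [hasBorder_append_append_iff huv le_rfl, and_iff_right hpos, List.take_length, huv,
    Nat.sub_self, List.drop_zero]

theorem borderF_append_append_eq_length_iff (hu : u ≠ []) (huv : u.length = v.length) :
    borderF (u ++ w ++ v) = u.length ↔ u = v ∧ Unbordered u := by
  rw [borderF_eq_iff_isLeast (List.length_pos_iff.2 hu).ne', IsLeast, Set.mem_ofPred_eq,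
    hasBorder_append_append_length_iff hu huv, unbordered_iff_forall_length_le]
  refine and_congr_right ?_
  rintro rfl
  refine forall_congr' fun k => ?_
  rcases le_total k u.length with hk | hk
  · exact imp_congr_left (hasBorder_append_append_self_iff hk)
  · exact iff_of_true (fun _ => hk) (fun _ => hk)

lemma maxUnb_le_of_isInfix (h : T <:+: S) : maxUnb T ≤ maxUnb S := by
  refine csSup_le_csSup' ⟨S.length, ?_⟩ ?_
  · rintro _ ⟨R, _, hRS, _, rfl⟩
    exact hRS.length_le
  · rintro _ ⟨R, hR, hRT, hunb, hlen⟩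
    exact ⟨R, hR, hRT.trans h, hunb, hlen⟩

lemma exp_mul_length_sub_maxUnb_le {t : ℝ} (ht : 0 ≤ t) (h : T <:+: S) :
    Real.exp (t * (S.length - maxUnb S)) ≤
      Real.exp (t * (S.length - T.length)) * Real.exp (t * (T.length - maxUnb T)) := by
  have hL : (maxUnb T : ℝ) ≤ maxUnb S := Nat.cast_le.2 (maxUnb_le_of_isInfix h)
  rw [← Real.exp_add, ← mul_add, sub_add_sub_cancel]
  gcongr

end Border

section Conditioning

open scoped BigOperators

variable {Γ M : Type*} {ℓ m : ℕ}

lemma borderF_ofFn_append_append_eq_iff (hℓ : ℓ ≠ 0) (u v : Fin ℓ → Γ) (w : Fin m → Γ) :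
    borderF (List.ofFn (Fin.append (Fin.append u w) v)) = ℓ ↔
      u = v ∧ Unbordered (List.ofFn u) := by
  have hu : List.ofFn u ≠ [] := by rwa [Ne, List.ofFn_eq_nil_iff]
  have huv : (List.ofFn u).length = (List.ofFn v).length := by simp only [List.length_ofFn]
  rw [List.ofFn_fin_append, List.ofFn_fin_append, ← List.ofFn_injective.eq_iff (a := u),
    ← borderF_append_append_eq_length_iff hu huv (w := List.ofFn w), List.length_ofFn]

lemma exists_unbordered_append_of_borderF_eq (hℓ : ℓ ≠ 0) {S : Fin (ℓ + m + ℓ) → Γ}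
    (hS : borderF (List.ofFn S) = ℓ) :
    ∃ (u : Fin ℓ → Γ) (w : Fin m → Γ),
      Unbordered (List.ofFn u) ∧ Fin.append (Fin.append u w) u = S := by
  obtain ⟨⟨uw, v⟩, rfl⟩ := (Fin.appendEquiv (ℓ + m) ℓ).surjective S
  obtain ⟨⟨u, w⟩, rfl⟩ := (Fin.appendEquiv ℓ m).surjective uw
  obtain ⟨rfl, hu⟩ := (borderF_ofFn_append_append_eq_iff hℓ u v w).1 hS
  exact ⟨u, w, hu, rfl⟩

lemma append_append_self_injective :
    Function.Injective fun p : (Fin ℓ → Γ) × (Fin m → Γ) =>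
      Fin.append (Fin.append p.1 p.2) p.1 := by
  intro p q h
  have hpq : (Fin.append p.1 p.2, p.1) = (Fin.append q.1 q.2, q.1) :=
    (Fin.appendEquiv (ℓ + m) ℓ).injective h
  exact (Fin.appendEquiv ℓ m).injective (Prod.ext_iff.1 hpq).1

variable [Fintype Γ] [AddCommMonoid M] [Module ℚ≥0 M]

lemma expect_filter_borderF_eq [DecidablePred (Unbordered (α := Γ))] (hℓ : ℓ ≠ 0)
    (f : (Fin (ℓ + m + ℓ) → Γ) → M) :
    𝔼 S with borderF (List.ofFn S) = ℓ, f S =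
      𝔼 u : Fin ℓ → Γ with Unbordered (List.ofFn u), 𝔼 w : Fin m → Γ,
        f (Fin.append (Fin.append u w) u) := by
  rw [← expect_product']
  symm
  refine expect_nbij (fun p => Fin.append (Fin.append p.1 p.2) p.1) ?_ (fun _ _ => rfl)
    append_append_self_injective.injOn ?_
  · rintro ⟨u, w⟩ h
    have hu : Unbordered (List.ofFn u) := (mem_filter.1 (mem_product.1 h).1).2
    exact mem_filter.2 ⟨mem_univ _, (borderF_ofFn_append_append_eq_iff hℓ u u w).2 ⟨rfl, hu⟩⟩
  · intro S hS
    obtain ⟨u, w, hu, rfl⟩ := exists_unbordered_append_of_borderF_eq hℓ (mem_filter.1 hS).2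
    exact ⟨(u, w), mem_product.2 ⟨mem_filter.2 ⟨mem_univ u, hu⟩, mem_univ w⟩, rfl⟩

theorem expect_middle_filter_borderF_eq (hℓ : ℓ ≠ 0)
    (hF : ∃ S : Fin (ℓ + m + ℓ) → Γ, borderF (List.ofFn S) = ℓ) (f : List Γ → M) :
    𝔼 S : Fin (ℓ + m + ℓ) → Γ with borderF (List.ofFn S) = ℓ,
        f (((List.ofFn S).drop ℓ).take m) =
      𝔼 w : Fin m → Γ, f (List.ofFn w) := by
  classical
  have hunbordered : (univ.filter fun u : Fin ℓ → Γ => Unbordered (List.ofFn u)).Nonempty := by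
    obtain ⟨S, hS⟩ := hF
    obtain ⟨u, _, hu, _⟩ := exists_unbordered_append_of_borderF_eq hℓ hS
    exact ⟨u, mem_filter.2 ⟨mem_univ u, hu⟩⟩
  have hmiddle (u : Fin ℓ → Γ) (w : Fin m → Γ) :
      ((List.ofFn (Fin.append (Fin.append u w) u)).drop ℓ).take m = List.ofFn w := by
    simp [List.ofFn_fin_append]
  simp only [expect_filter_borderF_eq hℓ, hmiddle, expect_const hunbordered]

end Conditioning

/-- for uniformly random `S ∈ Σⁿ` (`σ ≥ 2`, `n ≥ 2`, `1 ≤ ℓ ≤ n/2`), conditioned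
on the event `A = {F(S) = ℓ}` (assumed to have positive probability), the middle factor
`S[ℓ+1, n-ℓ]` is uniformly distributed on `Σ^{n-2ℓ}`; in particular, for every `t ≥ 0`,
`E[e^{t(n - L(S))} | F(S) = ℓ] ≤ e^{2tℓ}·E[e^{t(m - L(T))}]` where `m = n - 2ℓ` and `T` is
uniformly random in `Σᵐ`. -/
theorem conditional_middle_uniform (σ : ℕ) (hσ : 2 ≤ σ) (Γ : Type) [Fintype Γ] [DecidableEq Γ]
    (hcard : Fintype.card Γ = σ) (n ℓ : ℕ) (hn : 2 ≤ n) (hℓ1 : 1 ≤ ℓ) (hℓ2 : 2 * ℓ ≤ n)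
    (A : Finset (Fin n → Γ))
    (hA : A = univ.filter fun S => borderF (List.ofFn S) = ℓ)
    (hpos : 0 < A.card) (t : ℝ) (ht : 0 ≤ t) :
    (∀ w : List Γ, w.length = n - 2 * ℓ →
      (((A.filter fun S => ((List.ofFn S).drop ℓ).take (n - 2 * ℓ) = w).card : ℝ)) / (A.card : ℝ)
        = 1 / (σ : ℝ) ^ (n - 2 * ℓ)) ∧
    (∑ S ∈ A, Real.exp (t * ((n : ℝ) - (maxUnb (List.ofFn S) : ℝ)))) / (A.card : ℝ) ≤
      Real.exp (2 * t * ℓ) *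
        ((∑ T : Fin (n - 2 * ℓ) → Γ,
            Real.exp (t * (((n - 2 * ℓ : ℕ) : ℝ) - (maxUnb (List.ofFn T) : ℝ)))) /
          (σ : ℝ) ^ (n - 2 * ℓ)) := by
  have hℓ : ℓ ≠ 0 := Nat.one_le_iff_ne_zero.1 hℓ1
  generalize hm : n - 2 * ℓ = m
  obtain rfl : n = ℓ + m + ℓ := by omega
  subst hcard hA
  have hF : ∃ S : Fin (ℓ + m + ℓ) → Γ, borderF (List.ofFn S) = ℓ := by
    simpa only [card_pos, filter_nonempty_iff, mem_univ, true_and] using hpos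
  have hmiddle (f : List Γ → ℝ) := expect_middle_filter_borderF_eq hℓ hF f
  simp only [expect_eq_sum_div_card, card_univ, Fintype.card_fun, Fintype.card_fin,
    Nat.cast_pow] at hmiddle
  constructor
  · rintro w rfl
    have hw (v : Fin w.length → Γ) : List.ofFn v = w ↔ v = w.get := by
      rw [← List.ofFn_injective.eq_iff, List.ofFn_get]
    simpa [hw] using hmiddle fun v => if v = w then 1 else 0
  · rw [← hmiddle fun v => Real.exp (t * (m - maxUnb v)), ← mul_div_assoc, mul_sum]
    gcongr with S
    have hinfix : ((List.ofFn S).drop ℓ).take m <:+: List.ofFn S :=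
      (List.take_prefix m _).isInfix.trans (List.drop_suffix ℓ _).isInfix
    have hlength : (((List.ofFn S).drop ℓ).take m).length = m := by simp
    have hexp : t * (((ℓ + m + ℓ : ℕ) : ℝ) - m) = 2 * t * ℓ := by push_cast; ring
    simpa only [hlength, List.length_ofFn, hexp] using exp_mul_length_sub_maxUnb_le ht hinfix
end
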